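/- (Ehle) For every q ≥ 1, all complex zeros of the diagonal Padé numerator N_q lie in the open left half-plane: if N_q(z) = 0 then Re(z) < 0. Consequently all zeros of D_q(z) = N_q(−z) lie in the open right half-plane. -/

import Mathlib

/-!
The zero-freeness of `N_q` on the closed right half-plane comes from a continued fraction. After
clearing the constant `q! / (2q)!`, the numerators become `P_q(z) = Σ (2q-j)! / (j! (q-j)!) z^j`
(reverse Bessel polynomials, up to scaling) and satisfy the three-term recurrence
`P_{q+2} = 2(2q+3) P_{q+1} + z² P_q` (`padePoly_rec`). Hence the ratios
`r_q = P_{q+1} / (z P_q)` obey `r_{q+1} = 2(2q+3) / z + 1 / r_q`, with `r_0 = 2 / z + 1`.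
Inversion preserves the right half-plane, so if `Re z ≥ 0` and `z ≠ 0` then `Re r_q > 0` for
every `q` by induction (`padePoly_ratio_re_pos`), and in particular `P_q(z) ≠ 0`. At `z = 0` the
value is the positive number `(2q)! / q!`.
-/

/-- Degree-`q` diagonal Padé numerator of the exponential:
`N_q(z) = Σ_{j=0}^{q} [(2q-j)!·q! / ((2q)!·j!·(q-j)!)]·z^j`. -/
noncomputable def padeNs (q : ℕ) (z : ℂ) : ℂ :=
  ∑ j ∈ Finset.range (q + 1),
    ((((2 * q - j).factorial * q.factorial : ℕ) : ℂ) /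
      (((2 * q).factorial * j.factorial * (q - j).factorial : ℕ) : ℂ)) * z ^ j

/-- Degree-`q` diagonal Padé denominator: `D_q(z) = N_q(−z)`. -/
noncomputable def padeDs (q : ℕ) (z : ℂ) : ℂ :=
  padeNs q (-z)

/-- The coefficient `(2q-j)! / (j! (q-j)!)` of `z^j` in `P_q`, extended by zero to `j > q`
(where the natural-number subtractions would truncate). -/
noncomputable def padeCoeff (q j : ℕ) : ℂ :=
  if j ≤ q then ((2 * q - j).factorial : ℂ) / ((j.factorial : ℂ) * ((q - j).factorial : ℂ)) else 0

/-- The rescaled Padé numerator `P_q = ((2q)! / q!) N_q`. -/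
noncomputable def padePoly (q : ℕ) (z : ℂ) : ℂ :=
  ∑ j ∈ Finset.range (q + 1), padeCoeff q j * z ^ j

lemma padeNs_eq (q : ℕ) (z : ℂ) :
    padeNs q z = ((q.factorial : ℂ) / ((2 * q).factorial : ℂ)) * padePoly q z := by
  unfold padeNs padePoly
  rw [Finset.mul_sum]
  refine Finset.sum_congr rfl fun j hj => ?_
  have hj' : j ≤ q := Nat.lt_succ_iff.mp (Finset.mem_range.mp hj)
  rw [padeCoeff, if_pos hj']
  push_cast
  have h1 : ((2 * q).factorial : ℂ) ≠ 0 := by exact_mod_cast Nat.factorial_ne_zero _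
  have h2 : (j.factorial : ℂ) ≠ 0 := by exact_mod_cast Nat.factorial_ne_zero _
  have h3 : ((q - j).factorial : ℂ) ≠ 0 := by exact_mod_cast Nat.factorial_ne_zero _
  field_simp

lemma padeCoeff_rec_zero (q : ℕ) :
    padeCoeff (q + 2) 0 = 2 * (2 * q + 3) * padeCoeff (q + 1) 0 := by
  have e1 : 2 * (q + 2) = (2 * q + 2) + 1 + 1 := by ring
  have e2 : 2 * (q + 1) = 2 * q + 2 := by ring
  have h1 : ((q + 1).factorial : ℂ) ≠ 0 := by exact_mod_cast Nat.factorial_ne_zero _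
  have h2 : (q : ℂ) + 1 + 1 ≠ 0 := by exact_mod_cast Nat.succ_ne_zero (q + 1)
  simp only [padeCoeff, Nat.zero_le, if_true, Nat.sub_zero, e1, e2]
  rw [Nat.factorial_succ (2 * q + 2 + 1), Nat.factorial_succ (2 * q + 2),
    show q + 2 = q + 1 + 1 from rfl, Nat.factorial_succ (q + 1)]
  push_cast
  field_simp
  ring

lemma padeCoeff_rec_one (q : ℕ) :
    padeCoeff (q + 2) 1 = 2 * (2 * q + 3) * padeCoeff (q + 1) 1 := by
  have e1 : 2 * (q + 2) - 1 = (2 * q + 1) + 1 + 1 := by omega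
  have e2 : 2 * (q + 1) - 1 = 2 * q + 1 := by omega
  have e3 : q + 2 - 1 = q + 1 := by omega
  have e4 : q + 1 - 1 = q := by omega
  have h1 : (q.factorial : ℂ) ≠ 0 := by exact_mod_cast Nat.factorial_ne_zero _
  have h2 : (q : ℂ) + 1 ≠ 0 := by exact_mod_cast Nat.succ_ne_zero q
  rw [padeCoeff, padeCoeff, if_pos (by omega), if_pos (by omega), e1, e2, e3, e4,
    Nat.factorial_succ (2 * q + 1 + 1), Nat.factorial_succ (2 * q + 1), Nat.factorial_succ q]
  push_cast
  field_simp
  ring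

lemma padeCoeff_rec_add_two (q j : ℕ) (hj : j ≤ q) :
    padeCoeff (q + 2) (j + 2) =
      2 * (2 * q + 3) * padeCoeff (q + 1) (j + 2) + padeCoeff q j := by
  have hf : ∀ n : ℕ, (n.factorial : ℂ) ≠ 0 := fun n => by exact_mod_cast Nat.factorial_ne_zero n
  rcases hj.eq_or_lt with rfl | hlt
  · have e1 : 2 * (j + 2) - (j + 2) = j + 2 := by omega
    have e2 : 2 * j - j = j := by omega
    rw [padeCoeff, padeCoeff, padeCoeff, if_pos le_rfl, if_neg (by omega), if_pos le_rfl, e1, e2]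
    simp [hf]
  · obtain ⟨k, rfl⟩ := Nat.exists_eq_add_of_lt hlt
    have e1 : 2 * (j + k + 1 + 2) - (j + 2) = (j + 2 * k + 2) + 1 + 1 := by omega
    have e2 : j + k + 1 + 2 - (j + 2) = k + 1 := by omega
    have e3 : 2 * (j + k + 1 + 1) - (j + 2) = j + 2 * k + 2 := by omega
    have e4 : j + k + 1 + 1 - (j + 2) = k := by omega
    have e5 : 2 * (j + k + 1) - j = j + 2 * k + 2 := by omega
    have e6 : j + k + 1 - j = k + 1 := by omega
    rw [padeCoeff, padeCoeff, padeCoeff, if_pos (by omega), if_pos (by omega), if_pos (by omega),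
      e1, e2, e3, e4, e5, e6, Nat.factorial_succ (j + 2 * k + 2 + 1),
      Nat.factorial_succ (j + 2 * k + 2), Nat.factorial_succ k,
      show j + 2 = j + 1 + 1 from rfl, Nat.factorial_succ (j + 1), Nat.factorial_succ j]
    have h1 := hf k
    have h2 := hf j
    have h3 : (j : ℂ) + 1 ≠ 0 := by exact_mod_cast Nat.succ_ne_zero j
    have h4 : (j : ℂ) + 1 + 1 ≠ 0 := by exact_mod_cast Nat.succ_ne_zero (j + 1)
    have h5 : (k : ℂ) + 1 ≠ 0 := by exact_mod_cast Nat.succ_ne_zero k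
    push_cast
    field_simp
    ring

lemma padePoly_rec (q : ℕ) (z : ℂ) :
    padePoly (q + 2) z = 2 * (2 * q + 3) * padePoly (q + 1) z + z ^ 2 * padePoly q z := by
  -- Pad `P_{q+1}` with its vanishing top coefficient, so that all sums split off `j = 0, 1` alike.
  have hpad : padePoly (q + 1) z =
      ∑ j ∈ Finset.range (q + 1 + 1 + 1), padeCoeff (q + 1) j * z ^ j := by
    rw [Finset.sum_range_succ _ (q + 1 + 1), padePoly]
    simp [padeCoeff]
  have hsum : ∑ j ∈ Finset.range (q + 1), padeCoeff (q + 2) (j + 1 + 1) * z ^ (j + 1 + 1) =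
      2 * (2 * q + 3) *
        ∑ j ∈ Finset.range (q + 1), padeCoeff (q + 1) (j + 1 + 1) * z ^ (j + 1 + 1) +
      z ^ 2 * ∑ j ∈ Finset.range (q + 1), padeCoeff q j * z ^ j := by
    rw [Finset.mul_sum, Finset.mul_sum, ← Finset.sum_add_distrib]
    refine Finset.sum_congr rfl fun j hj => ?_
    rw [padeCoeff_rec_add_two q j (Nat.lt_succ_iff.mp (Finset.mem_range.mp hj))]
    ring
  rw [hpad, padePoly, padePoly, show q + 2 + 1 = q + 1 + 1 + 1 from rfl]
  simp only [Finset.sum_range_succ' _ (q + 1 + 1), Finset.sum_range_succ' _ (q + 1), zero_add]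
  rw [hsum, padeCoeff_rec_zero, padeCoeff_rec_one]
  ring

lemma inv_re_pos {w : ℂ} (hw : 0 < w.re) : 0 < (w⁻¹).re := by
  have hne : w ≠ 0 := by rintro rfl; simp at hw
  rw [Complex.inv_re]
  exact div_pos hw (Complex.normSq_pos.mpr hne)

/-- A positive real part also forces `P_{q+1}(z)` and `P_q(z)` to be nonzero, since a quotient
with a vanishing numerator or denominator is `0` in Lean. -/
lemma padePoly_ratio_re_pos {z : ℂ} (hz : z ≠ 0) (hre : 0 ≤ z.re) (q : ℕ) :
    0 < (padePoly (q + 1) z / (z * padePoly q z)).re := by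
  have hinv : 0 ≤ (z⁻¹).re := by
    rw [Complex.inv_re]
    exact div_nonneg hre (Complex.normSq_nonneg z)
  induction q with
  | zero =>
    have h : padePoly (0 + 1) z / (z * padePoly 0 z) = ((2 : ℝ) : ℂ) * z⁻¹ + 1 := by
      simp [padePoly, padeCoeff, Finset.sum_range_succ]
      field_simp
    rw [h, Complex.add_re, Complex.re_ofReal_mul, Complex.one_re]
    positivity
  | succ q ih =>
    have hP : padePoly (q + 1) z ≠ 0 := by
      intro h
      simp [h] at ih
    have h : padePoly (q + 1 + 1) z / (z * padePoly (q + 1) z) =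
        ((2 * (2 * q + 3) : ℝ) : ℂ) * z⁻¹ + (padePoly (q + 1) z / (z * padePoly q z))⁻¹ := by
      rw [show q + 1 + 1 = q + 2 from rfl, padePoly_rec]
      push_cast
      field_simp
    rw [h, Complex.add_re, Complex.re_ofReal_mul]
    have := inv_re_pos ih
    positivity

lemma padePoly_zero_ne_zero (q : ℕ) : padePoly q 0 ≠ 0 := by
  rw [padePoly, Finset.sum_range_succ']
  simp [padeCoeff, Nat.factorial_ne_zero]

lemma padePoly_ne_zero {z : ℂ} (hre : 0 ≤ z.re) (q : ℕ) : padePoly q z ≠ 0 := by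
  rcases eq_or_ne z 0 with rfl | hz
  · exact padePoly_zero_ne_zero q
  · intro h
    have := padePoly_ratio_re_pos hz hre q
    simp [h] at this

/-- (Ehle) For every `q ≥ 1`, all zeros of the diagonal Padé numerator `N_q` lie in
the open left half-plane; consequently all zeros of `D_q(z) = N_q(−z)` lie in the
open right half-plane. -/
theorem pade_zeros_left_half_plane (q : ℕ) (hq : 1 ≤ q) :
    (∀ z : ℂ, padeNs q z = 0 → z.re < 0) ∧
      (∀ z : ℂ, padeDs q z = 0 → 0 < z.re) := by
  have key : ∀ z : ℂ, padeNs q z = 0 → z.re < 0 := by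
    intro z h
    by_contra! hre
    rw [padeNs_eq] at h
    refine mul_ne_zero (div_ne_zero ?_ ?_) (padePoly_ne_zero hre q) h <;>
      exact_mod_cast Nat.factorial_ne_zero _
  refine ⟨key, fun z h => ?_⟩
  have := key (-z) h
  simpa using this
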